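/- arXiv:2009.08008 — 2 statements merged into one kernel-verified Lean document; each statement's English description precedes it below -/
import Mathlib

section
/- Product rule for the nonlocal interaction operator: let χ : ℝⁿ → ℝⁿ and Ψ : ℝⁿ × ℝⁿ → ℝ^{n×n} be measurable, and let κ be the vector-valued two-point function with components κ_j(x,x') = Σ_i χ_i(x) Ψ_{ij}(x,x'). Then for every x ∈ ℝⁿ, N(κ)(x) = χ(x)·N(Ψ)(x) − ∫_{Ω∪Ω_τ} Σ_{i,j} (χ_i(x') − χ_i(x)) Ψ_{ij}(x',x) α_j(x,x') dx'. -/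
open MeasureTheory Matrix

/-- Nonlocal interaction operator
`N(v)(x) = −∫_{Ω∪Ω_τ} (v(x,x') + v(x',x))·α(x,x') dx'` for vector-valued two-point
functions (contraction of the last = only index with `α`). -/
noncomputable def NopV {n : ℕ} (Ω Ωτ : Set (Fin n → ℝ))
    (α : (Fin n → ℝ) → (Fin n → ℝ) → (Fin n → ℝ))
    (v : (Fin n → ℝ) → (Fin n → ℝ) → (Fin n → ℝ))
    (x : Fin n → ℝ) : ℝ :=
  -∫ x' in Ω ∪ Ωτ, (v x x' + v x' x) ⬝ᵥ α x x'

/-- Nonlocal interaction operator for matrix-valued two-point functions. -/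
noncomputable def Nop {n : ℕ} (Ω Ωτ : Set (Fin n → ℝ))
    (α : (Fin n → ℝ) → (Fin n → ℝ) → (Fin n → ℝ))
    (v : (Fin n → ℝ) → (Fin n → ℝ) → Matrix (Fin n) (Fin n) ℝ)
    (x : Fin n → ℝ) : Fin n → ℝ :=
  -∫ x' in Ω ∪ Ωτ, (v x x' + v x' x).mulVec (α x x')

section ProductRule

variable {𝔸 X m l : Type*} [Fintype m]

theorem dotProduct_mulVec_eq_sum [Fintype l] [NonUnitalSemiring 𝔸]
    (c : m → 𝔸) (M : Matrix m l 𝔸) (a : l → 𝔸) :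
    c ⬝ᵥ M *ᵥ a = ∑ i, ∑ j, c i * M i j * a j := by
  simp only [dotProduct, mulVec, Finset.mul_sum, mul_assoc]

theorem vecMul_add_vecMul_dotProduct [Fintype l] [NonUnitalRing 𝔸]
    (c d : m → 𝔸) (P Q : Matrix m l 𝔸) (a : l → 𝔸) :
    (c ᵥ* P + d ᵥ* Q) ⬝ᵥ a = c ⬝ᵥ (P + Q) *ᵥ a + (d - c) ⬝ᵥ Q *ᵥ a := by
  rw [add_dotProduct, ← dotProduct_mulVec, ← dotProduct_mulVec, add_mulVec, dotProduct_add,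
    sub_dotProduct]
  abel

variable [NormedRing 𝔸] [MeasurableSpace X] {μ : Measure X}

theorem integrable_const_dotProduct {f : X → m → 𝔸} (hf : Integrable f μ) (c : m → 𝔸) :
    Integrable (fun x => c ⬝ᵥ f x) μ :=
  integrable_finsetSum _ fun i _ => (hf.eval i).const_mul (c i)

variable [NormedAlgebra ℝ 𝔸] [CompleteSpace 𝔸]

theorem integral_const_dotProduct {f : X → m → 𝔸} (hf : Integrable f μ) (c : m → 𝔸) :
    ∫ x, c ⬝ᵥ f x ∂μ = c ⬝ᵥ ∫ x, f x ∂μ :=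
  calc ∫ x, c ⬝ᵥ f x ∂μ
      = ∑ i, ∫ x, c i * f x i ∂μ := integral_finsetSum _ fun i _ => (hf.eval i).const_mul (c i)
    _ = ∑ i, c i * ∫ x, f x i ∂μ :=
      Finset.sum_congr rfl fun i _ => integral_const_mul_of_integrable (hf.eval i)
    _ = c ⬝ᵥ ∫ x, f x ∂μ := by simp only [dotProduct, eval_integral hf.eval]

theorem nonlocal_interaction_product_rule_general [Fintype l]
    (α : X → X → l → 𝔸) (χ : X → m → 𝔸) (Ψ : X → X → Matrix m l 𝔸) (x : X)
    (hsum : Integrable (fun x' => (Ψ x x' + Ψ x' x) *ᵥ α x x') μ)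
    (hdiff : Integrable (fun x' => ∑ i, ∑ j, (χ x' i - χ x i) * Ψ x' x i j * α x x' j) μ) :
    -∫ x', (χ x ᵥ* Ψ x x' + χ x' ᵥ* Ψ x' x) ⬝ᵥ α x x' ∂μ
      = χ x ⬝ᵥ (-∫ x', (Ψ x x' + Ψ x' x) *ᵥ α x x' ∂μ)
        - ∫ x', ∑ i, ∑ j, (χ x' i - χ x i) * Ψ x' x i j * α x x' j ∂μ := by
  have pointwise (x' : X) : (χ x ᵥ* Ψ x x' + χ x' ᵥ* Ψ x' x) ⬝ᵥ α x x'
      = χ x ⬝ᵥ (Ψ x x' + Ψ x' x) *ᵥ α x x'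
        + ∑ i, ∑ j, (χ x' i - χ x i) * Ψ x' x i j * α x x' j := by
    rw [vecMul_add_vecMul_dotProduct, dotProduct_mulVec_eq_sum (χ x' - χ x)]
    simp only [Pi.sub_apply]
  simp only [pointwise]
  rw [integral_add (integrable_const_dotProduct hsum (χ x)) hdiff,
    integral_const_dotProduct hsum, dotProduct_neg, neg_add']

end ProductRule

/-- **Product rule for the nonlocal interaction operator**:
for `κ_j(x,x') = Σ_i χ_i(x) Ψ_{ij}(x,x')` and every `x ∈ ℝⁿ`,
`N(κ)(x) = χ(x)·N(Ψ)(x) − ∫_{Ω∪Ω_τ} Σ_{i,j} (χ_i(x') − χ_i(x)) Ψ_{ij}(x',x) α_j(x,x') dx'`. -/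
theorem nonlocal_interaction_product_rule {n : ℕ} (hn : 1 ≤ n)
    (Ω Ωτ : Set (Fin n → ℝ)) (hΩ : MeasurableSet Ω) (hΩτ : MeasurableSet Ωτ)
    (hdisj : Disjoint Ω Ωτ)
    (α : (Fin n → ℝ) → (Fin n → ℝ) → (Fin n → ℝ))
    (hαmeas : Measurable fun p : (Fin n → ℝ) × (Fin n → ℝ) => α p.1 p.2)
    (hαanti : ∀ x x', α x x' = -α x' x)
    (hαsupp : ∀ x x', x ∈ Ω ∪ Ωτ → x' ∉ Ω ∪ Ωτ → α x x' = 0)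
    (χ : (Fin n → ℝ) → (Fin n → ℝ)) (hχ : Measurable χ)
    (Ψ : (Fin n → ℝ) → (Fin n → ℝ) → Matrix (Fin n) (Fin n) ℝ)
    (hΨ : ∀ i j, Measurable fun p : (Fin n → ℝ) × (Fin n → ℝ) => Ψ p.1 p.2 i j)
    (hint1 : ∀ x, IntegrableOn
      (fun x' => (Matrix.vecMul (χ x) (Ψ x x') + Matrix.vecMul (χ x') (Ψ x' x)) ⬝ᵥ α x x')
      (Ω ∪ Ωτ))
    (hint2 : ∀ x, IntegrableOn
      (fun x' => (Ψ x x' + Ψ x' x).mulVec (α x x')) (Ω ∪ Ωτ))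
    (hint3 : ∀ x, IntegrableOn
      (fun x' => ∑ i, ∑ j, (χ x' i - χ x i) * Ψ x' x i j * α x x' j) (Ω ∪ Ωτ)) :
    ∀ x : Fin n → ℝ,
      NopV Ω Ωτ α (fun y y' => Matrix.vecMul (χ y) (Ψ y y')) x
        = χ x ⬝ᵥ Nop Ω Ωτ α Ψ x
          - ∫ x' in Ω ∪ Ωτ, ∑ i, ∑ j, (χ x' i - χ x i) * Ψ x' x i j * α x x' j :=
  fun x => nonlocal_interaction_product_rule_general α χ Ψ x (hint2 x) (hint3 x)
end

section
/- Exact aliasing formula for the Fourier-cosine Laplace inversion series: let a ∈ ℝ, T > 0, and let f : ℝ → ℝ be continuous on [0,∞) with f(t) = 0 for t < 0, and suppose there exist M ≥ 0 and b < a with |f(t)| ≤ M e^{bt} for all t ≥ 0. Let F(s) = ∫₀^∞ f(t) e^{−st} dt, and assume Σ_{k=1}^∞ |Re F(a + ikπ/T)| < ∞. Then for every t ∈ (0, 2T), (2 e^{at}/T) [ Re F(a)/2 + Σ_{k=1}^∞ Re F(a + ikπ/T) cos(kπt/T) ] = f(t) + Σ_{n=1}^∞ [ e^{−2naT} f(t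 + 2nT) + e^{−2a(nT − t)} f(2nT − t) ]; in particular the truncated series (2 e^{at}/T)[Re F(a)/2 + Σ_{k=1}^N Re F(a + ikπ/T) cos(kπt/T)] converges, as N → ∞, to f(t) plus the exponentially small aliasing error given by the second sum. -/
open MeasureTheory

/-!
For `h x = e^{-a|x|} f |x|`, the real part of `F` on the line `Re s = a` is the cosine transform of
`f` damped by `e^{-at}`, hence half the Fourier transform of the even function `h`. The left-hand
side is therefore the spectral side of Poisson's summation formula for `h` with period `2T`, and
the right-hand side is the sum of `h` over the translates `t + 2nT`: the translate `n = 0` gives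
`f t`, and by evenness `n` and `-n` together give one aliasing term.
-/

open Filter Set Asymptotics
open scoped FourierTransform Real

section EvenSeries

theorem hasSum_natCast_add_one_add_neg {G : Type*} [AddCommGroup G] [TopologicalSpace G]
    [IsTopologicalAddGroup G] {u : ℤ → G} {s : G} (hu : HasSum u s) :
    HasSum (fun n : ℕ => u (n + 1) + u (-(n + 1))) (s - u 0) := by
  have h := (hasSum_nat_add_iff' 1).mpr hu.nat_add_neg
  simpa using h

theorem summable_int_of_even {G : Type*} [AddCommMonoid G] [TopologicalSpace G] [ContinuousAdd G]
    {c : ℤ → G} (hc : c.Even) (hs : Summable fun k : ℕ => c (k + 1)) : Summable c :=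
  .of_add_one_of_neg_add_one hs (hs.congr fun k => (hc (k + 1)).symm)

theorem tsum_mul_fourier_of_even {c : ℤ → ℂ} (hc : c.Even)
    (hs : Summable fun k : ℕ => c (k + 1)) (L x : ℝ) :
    ∑' n : ℤ, c n * fourier n (x : AddCircle L) =
      c 0 + 2 * ∑' k : ℕ, c (k + 1) * (Real.cos (2 * π * (k + 1) * x / L) : ℝ) := by
  have hsummable : Summable fun n : ℤ => c n * fourier n (x : AddCircle L) := by
    refine .of_norm ((summable_int_of_even hc hs).norm.congr fun n => ?_)
    rw [norm_mul, fourier_apply, Circle.norm_coe, mul_one]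
  have hpair (k : ℕ) :
      c (k + 1) * fourier (k + 1) (x : AddCircle L) +
          c (-(k + 1)) * fourier (-(k + 1)) (x : AddCircle L) =
        2 * (c (k + 1) * (Real.cos (2 * π * (k + 1) * x / L) : ℝ)) := by
    rw [hc, ← mul_add, mul_left_comm, Complex.ofReal_cos, Complex.two_cos, fourier_coe_apply,
      fourier_coe_apply]
    push_cast
    ring_nf
  have hsum := hasSum_natCast_add_one_add_neg hsummable.hasSum
  simp only [hpair, fourier_zero, mul_one] at hsum
  rw [← tsum_mul_left, hsum.tsum_eq, add_sub_cancel]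

end EvenSeries

section CosTransform

variable {E : Type*} [NormedAddCommGroup E]

/-- The Fourier cosine transform `∫₀^∞ cos(ωx) h(x) dx`, with angular frequency `ω` and no
normalizing factor, so that it is the real part of the Laplace transform on the imaginary axis when
`h` is real-valued. -/
noncomputable def cosTransform [NormedSpace ℝ E] (h : ℝ → E) (ω : ℝ) : E :=
  ∫ x in Ioi (0 : ℝ), Real.cos (ω * x) • h x

theorem even_cosTransform [NormedSpace ℝ E] (h : ℝ → E) : (cosTransform h).Even := fun ω => by
  simp only [cosTransform, neg_mul, Real.cos_neg]

theorem cosTransform_congr [NormedSpace ℝ E] {g h : ℝ → E} (hgh : EqOn g h (Ioi 0)) (ω : ℝ) :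
    cosTransform g ω = cosTransform h ω :=
  setIntegral_congr_fun measurableSet_Ioi fun x hx => congrArg (Real.cos (ω * x) • ·) (hgh hx)

theorem cosTransform_comp_mul_left [NormedSpace ℝ E] (h : ℝ → E) {L : ℝ} (hL : 0 < L) (ω : ℝ) :
    cosTransform (fun x => h (L * x)) ω = L⁻¹ • cosTransform h (ω / L) := by
  have hscale := integral_comp_mul_left_Ioi (fun x => Real.cos (ω / L * x) • h x) 0 hL
  rw [mul_zero] at hscale
  rw [cosTransform, cosTransform, ← hscale]
  simp only [← mul_assoc, div_mul_cancel₀ ω hL.ne']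

theorem cosTransform_ofReal (h : ℝ → ℝ) (ω : ℝ) :
    cosTransform (fun x => (h x : ℂ)) ω = (cosTransform h ω : ℝ) := by
  rw [cosTransform, cosTransform, ← integral_complex_ofReal]
  simp only [Complex.real_smul, smul_eq_mul, Complex.ofReal_mul]

theorem fourier_eq_cosTransform_of_even [NormedSpace ℂ E] {h : ℝ → E} (hh : h.Even)
    (hi : Integrable h) (w : ℝ) : 𝓕 h w = (2 : ℂ) • cosTransform h (2 * π * w) := by
  set φ : ℝ → E := fun x => Complex.exp ((-2 * π * x * w : ℝ) * Complex.I) • h x with hφ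
  have hφi : Integrable φ := by
    refine hi.bdd_smul 1 (by fun_prop) (.of_forall fun x => ?_)
    rw [Complex.norm_exp_ofReal_mul_I]
  have hfold (x : ℝ) : φ x + φ (-x) = (2 : ℂ) • Real.cos (2 * π * w * x) • h x := by
    simp only [hφ]
    rw [hh, ← add_smul, ← Complex.coe_smul, smul_smul, Complex.ofReal_cos, Complex.two_cos]
    push_cast
    ring_nf
  calc 𝓕 h w = ∫ x, φ x := Real.fourier_real_eq_integral_exp_smul h w
    _ = (∫ x in Ioi 0, φ x) + ∫ x in Ioi 0, φ (-x) := by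
      rw [integral_comp_neg_Ioi, neg_zero, add_comm,
        intervalIntegral.integral_Iic_add_Ioi hφi.integrableOn hφi.integrableOn]
    _ = ∫ x in Ioi 0, (2 : ℂ) • Real.cos (2 * π * w * x) • h x := by
      rw [← integral_add hφi.integrableOn hφi.comp_neg.integrableOn]
      simp only [hfold]
    _ = (2 : ℂ) • cosTransform h (2 * π * w) := integral_smul _ _

theorem re_laplace_eq_cosTransform {f : ℝ → ℝ} {a : ℝ}
    (hi : IntegrableOn (fun t => Real.exp (-a * t) * f t) (Ioi 0)) (ω : ℝ) :
    (∫ t in Ioi (0 : ℝ), (f t : ℂ) * Complex.exp (-(a + ω * Complex.I) * t)).re =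
      cosTransform (fun t => Real.exp (-a * t) * f t) ω := by
  have hpolar (t : ℝ) : (f t : ℂ) * Complex.exp (-(a + ω * Complex.I) * t) =
      Complex.exp ((-ω * t : ℝ) * Complex.I) * ((Real.exp (-a * t) * f t : ℝ) : ℂ) := by
    rw [Complex.ofReal_mul (Real.exp _), Complex.ofReal_exp, ← mul_assoc, ← Complex.exp_add,
      mul_comm]
    push_cast
    ring_nf
  have hint : IntegrableOn (fun t : ℝ =>
      Complex.exp ((-ω * t : ℝ) * Complex.I) * ((Real.exp (-a * t) * f t : ℝ) : ℂ)) (Ioi 0) := by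
    refine Integrable.bdd_mul hi.ofReal (c := 1) (by fun_prop) (.of_forall fun t => ?_)
    rw [Complex.norm_exp_ofReal_mul_I]
  simp only [hpolar]
  rw [← RCLike.re_eq_complex_re, ← integral_re hint, cosTransform]
  simp only [RCLike.re_eq_complex_re, Complex.re_mul_ofReal, Complex.exp_ofReal_mul_I_re, neg_mul,
    Real.cos_neg, smul_eq_mul]

end CosTransform

section Decay

variable {E : Type*} [NormedAddCommGroup E] {h : ℝ → E} {r : ℝ}

theorem isBigO_cocompact_of_even {F : Type*} [Norm F] {g : ℝ → F} (hh : h.Even)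
    (hO : h =O[atTop] g) : h =O[cocompact ℝ] fun x => g |x| := by
  have habs (x : ℝ) : h |x| = h x := by
    rcases abs_choice x with hx | hx <;> simp only [hx, hh x]
  exact (hO.comp_tendsto tendsto_norm_cocompact_atTop).congr_left habs

theorem integrable_of_even_of_isBigO_rpow (hc : Continuous h) (hh : h.Even) (hr : 1 < r)
    (hO : h =O[atTop] fun x => x ^ (-r)) : Integrable h :=
  hc.locallyIntegrable.integrable_of_isBigO_atTop_of_norm_isNegInvariant
    (.of_forall fun x => congrArg norm (hh x).symm) hO
    (integrableAtFilter_rpow_atTop_iff.mpr (neg_lt_neg hr))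

theorem isBigO_rpow_comp_mul_left (hO : h =O[atTop] fun x => x ^ r) {L : ℝ} (hL : 0 < L) :
    (fun x => h (L * x)) =O[atTop] fun x => x ^ r := by
  refine (hO.comp_tendsto (tendsto_id.const_mul_atTop hL)).trans ?_
  refine .of_bound (L ^ r) ((eventually_ge_atTop 0).mono fun x hx => ?_)
  simp only [Function.comp_apply, id_eq]
  rw [Real.mul_rpow hL.le hx, norm_mul, Real.norm_of_nonneg (Real.rpow_nonneg hL.le r)]

theorem summable_translates_of_isBigO_rpow [CompleteSpace E] (hr : 1 < r)
    (hO : h =O[cocompact ℝ] fun x => |x| ^ (-r)) (x : ℝ) : Summable fun n : ℤ => h (x + n) := by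
  refine summable_of_isBigO ((Real.summable_one_div_int_add_rpow x r).mpr hr) ?_
  have htendsto : Tendsto (fun n : ℤ => x + n) cofinite (cocompact ℝ) :=
    (Homeomorph.addLeft x).isClosedEmbedding.tendsto_cocompact.comp Int.tendsto_coe_cofinite
  refine (hO.comp_tendsto htendsto).congr_right fun n => ?_
  rw [Function.comp_apply, Real.rpow_neg (abs_nonneg _), one_div, add_comm]

theorem isBigO_rpow_exp_neg_mul_mul {f : ℝ → ℝ} {a b : ℝ} (hb : b < a)
    (hO : f =O[atTop] fun t => Real.exp (b * t)) (s : ℝ) :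
    (fun t => Real.exp (-a * t) * f t) =O[atTop] fun t => t ^ s := by
  have hexp (t : ℝ) : Real.exp (-a * t) * Real.exp (b * t) = Real.exp (-(a - b) * t) := by
    rw [← Real.exp_add]
    ring_nf
  exact (((isBigO_refl _ _).mul hO).congr_right hexp).trans
    (isLittleO_exp_neg_mul_rpow_atTop (sub_pos.mpr hb) s).isBigO

end Decay

section Poisson

variable {h : ℝ → ℂ} {r : ℝ}

theorem hasSum_translates_int_of_even (hc : Continuous h) (hh : h.Even) (hr : 1 < r)
    (hO : h =O[atTop] fun x => x ^ (-r))
    (hs : Summable fun k : ℕ => cosTransform h (2 * π * (k + 1))) (x : ℝ) :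
    HasSum (fun n : ℤ => h (x + n))
      (2 * (cosTransform h 0 + 2 * ∑' k : ℕ, cosTransform h (2 * π * (k + 1)) *
        (Real.cos (2 * π * (k + 1) * x) : ℝ))) := by
  set c : ℤ → ℂ := fun n => cosTransform h (2 * π * n) with hc_def
  have hc_even : c.Even := fun n => by
    simp only [hc_def, Int.cast_neg, mul_neg, even_cosTransform h _]
  have hc_summable : Summable fun k : ℕ => c (k + 1) := by
    simpa [hc_def] using hs
  have hfourier (n : ℤ) : 𝓕 h n = 2 * c n :=
    fourier_eq_cosTransform_of_even hh (integrable_of_even_of_isBigO_rpow hc hh hr hO) n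
  have hdecay := isBigO_cocompact_of_even hh hO
  have hpoisson := Real.tsum_eq_tsum_fourier_of_rpow_decay_of_summable hc hr hdecay
    (by simpa only [hfourier] using (summable_int_of_even hc_even hc_summable).mul_left 2) x
  simp only [hfourier, mul_assoc (2 : ℂ), tsum_mul_left] at hpoisson
  rw [tsum_mul_fourier_of_even hc_even hc_summable] at hpoisson
  simp only [hc_def, Int.cast_zero, mul_zero, Int.cast_add, Int.cast_natCast, Int.cast_one,
    div_one] at hpoisson
  exact hpoisson ▸ (summable_translates_of_isBigO_rpow hr hdecay x).hasSum

theorem hasSum_translates_of_even (hc : Continuous h) (hh : h.Even) (hr : 1 < r)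
    (hO : h =O[atTop] fun x => x ^ (-r)) {L : ℝ} (hL : 0 < L)
    (hs : Summable fun k : ℕ => cosTransform h (2 * π * (k + 1) / L)) (t : ℝ) :
    HasSum (fun n : ℤ => h (t + n * L))
      (2 / L * (cosTransform h 0 + 2 * ∑' k : ℕ, cosTransform h (2 * π * (k + 1) / L) *
        (Real.cos (2 * π * (k + 1) * t / L) : ℝ))) := by
  have hunit := hasSum_translates_int_of_even (h := fun x => h (L * x)) (by fun_prop)
    (fun x => by simp only [mul_neg, hh _]) hr (isBigO_rpow_comp_mul_left hO hL)
    (by simpa only [cosTransform_comp_mul_left h hL] using hs.const_smul L⁻¹) (t / L)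
  have htranslate (n : ℤ) : L * (t / L + n) = t + n * L := by field_simp
  simp only [cosTransform_comp_mul_left h hL, htranslate, zero_div, Complex.real_smul,
    mul_assoc (L⁻¹ : ℂ), Complex.ofReal_inv, tsum_mul_left, mul_div_assoc'] at hunit
  convert hunit using 1
  ring

end Poisson

section Aliasing

variable {f : ℝ → ℝ} {a r : ℝ}

/-- The even extension `x ↦ e^{-a|x|} f |x|` of the damped signal `e^{-at} f(t)` on the half-line;
only the values of `f` on `[0, ∞)` enter. -/
noncomputable def dampedEvenExtension (a : ℝ) (f : ℝ → ℝ) (x : ℝ) : ℝ :=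
  Real.exp (-a * |x|) * f |x|

theorem dampedEvenExtension_of_nonneg {x : ℝ} (hx : 0 ≤ x) :
    dampedEvenExtension a f x = Real.exp (-a * x) * f x := by
  rw [dampedEvenExtension, abs_of_nonneg hx]

theorem even_dampedEvenExtension : (dampedEvenExtension a f).Even := fun x => by
  rw [dampedEvenExtension, dampedEvenExtension, abs_neg]

theorem continuous_dampedEvenExtension (hf : ContinuousOn f (Ici 0)) :
    Continuous (dampedEvenExtension a f) := by
  have hf_abs : Continuous fun x : ℝ => f |x| := hf.comp_continuous continuous_abs abs_nonneg
  exact (by fun_prop : Continuous fun x : ℝ => Real.exp (-a * |x|)).mul hf_abs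

theorem isBigO_dampedEvenExtension {g : ℝ → ℝ}
    (hO : (fun t => Real.exp (-a * t) * f t) =O[atTop] g) :
    dampedEvenExtension a f =O[atTop] g :=
  hO.congr' ((eventually_ge_atTop 0).mono fun _ hx => (dampedEvenExtension_of_nonneg hx).symm) .rfl

theorem re_laplace_eq_cosTransform_dampedEvenExtension
    (hi : Integrable (dampedEvenExtension a f)) (ω : ℝ) :
    (∫ t in Ioi (0 : ℝ), (f t : ℂ) * Complex.exp (-(a + ω * Complex.I) * t)).re =
      cosTransform (dampedEvenExtension a f) ω := by
  have heq : EqOn (dampedEvenExtension a f) (fun t => Real.exp (-a * t) * f t) (Ioi 0) :=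
    fun x hx => dampedEvenExtension_of_nonneg (le_of_lt hx)
  rw [cosTransform_congr heq,
    re_laplace_eq_cosTransform (hi.integrableOn.congr_fun heq measurableSet_Ioi)]

theorem hasSum_dampedEvenExtension_translates (hf : ContinuousOn f (Ici 0)) (hr : 1 < r)
    (hO : (fun t => Real.exp (-a * t) * f t) =O[atTop] fun t => t ^ (-r)) {T : ℝ} (hT : 0 < T)
    {R : ℝ → ℝ} (hR : ∀ ω, R ω =
      (∫ t in Ioi (0 : ℝ), (f t : ℂ) * Complex.exp (-(a + ω * Complex.I) * t)).re)
    (hs : Summable fun k : ℕ => R ((k + 1) * π / T)) (t : ℝ) :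
    HasSum (fun n : ℤ => dampedEvenExtension a f (t + n * (2 * T)))
      (2 / T * (R 0 / 2 + ∑' k : ℕ, R ((k + 1) * π / T) * Real.cos ((k + 1) * π * t / T))) := by
  have hc := continuous_dampedEvenExtension (a := a) hf
  have hO' := isBigO_dampedEvenExtension hO
  have hi := integrable_of_even_of_isBigO_rpow hc even_dampedEvenExtension hr hO'
  have hR' (ω : ℝ) : cosTransform (fun x => (dampedEvenExtension a f x : ℂ)) ω = (R ω : ℂ) := by
    rw [cosTransform_ofReal, hR, re_laplace_eq_cosTransform_dampedEvenExtension hi]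
  have hfreq (y : ℝ) : 2 * π * y / (2 * T) = y * π / T := by field_simp
  have hpoisson := hasSum_translates_of_even (h := fun x => (dampedEvenExtension a f x : ℂ))
    (by fun_prop) (fun x => by simp only [even_dampedEvenExtension x]) hr
    (Complex.isBigO_ofReal_left.mpr hO') (mul_pos two_pos hT)
    (by simpa only [hR', hfreq] using Complex.summable_ofReal.mpr hs) t
  simp only [hR', mul_assoc (2 * π) _ t, hfreq, mul_right_comm _ t] at hpoisson
  rw [← Complex.hasSum_ofReal]
  convert hpoisson using 1
  push_cast
  ring

theorem exp_mul_dampedEvenExtension_translates {T t : ℝ} (ht : t ∈ Icc 0 (2 * T)) (n : ℕ) :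
    Real.exp (a * t) * (dampedEvenExtension a f (t + (n + 1) * (2 * T)) +
        dampedEvenExtension a f (t + -(n + 1) * (2 * T))) =
      Real.exp (-2 * (n + 1) * a * T) * f (t + 2 * (n + 1) * T) +
        Real.exp (-2 * a * ((n + 1) * T - t)) * f (2 * (n + 1) * T - t) := by
  obtain ⟨ht₀, htT⟩ := ht
  have hnT : 0 ≤ n * (2 * T) := mul_nonneg n.cast_nonneg (ht₀.trans htT)
  have hright : dampedEvenExtension a f (t + (n + 1) * (2 * T)) =
      Real.exp (-a * (t + 2 * (n + 1) * T)) * f (t + 2 * (n + 1) * T) := by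
    rw [dampedEvenExtension_of_nonneg (by linarith)]
    ring_nf
  have hleft : dampedEvenExtension a f (t + -(n + 1) * (2 * T)) =
      Real.exp (-a * (2 * (n + 1) * T - t)) * f (2 * (n + 1) * T - t) := by
    rw [← even_dampedEvenExtension, dampedEvenExtension_of_nonneg (by linarith)]
    ring_nf
  rw [hright, hleft, mul_add, ← mul_assoc, ← mul_assoc, ← Real.exp_add, ← Real.exp_add]
  ring_nf

end Aliasing

theorem laplace_inversion_aliasing_general (a T : ℝ) (hT : 0 < T) (f : ℝ → ℝ)
    (hcont : ContinuousOn f (Set.Ici 0)) (r : ℝ) (hr : 1 < r)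
    (hdecay : (fun t => Real.exp (-a * t) * f t) =O[atTop] fun t => t ^ (-r))
    (F : ℂ → ℂ)
    (hF : ∀ s : ℂ, F s = ∫ t in Set.Ioi (0 : ℝ), (f t : ℂ) * Complex.exp (-s * (t : ℂ)))
    (hsum : Summable fun k : ℕ =>
      |(F ((a : ℂ) + (((k + 1 : ℝ) * Real.pi / T : ℝ) : ℂ) * Complex.I)).re|) :
    ∀ t ∈ Set.Icc (0 : ℝ) (2 * T),
      ((2 * Real.exp (a * t) / T) *
        ((F (a : ℂ)).re / 2
          + ∑' k : ℕ, (F ((a : ℂ) + (((k + 1 : ℝ) * Real.pi / T : ℝ) : ℂ) * Complex.I)).re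
              * Real.cos ((k + 1 : ℝ) * Real.pi * t / T))
        = f t + ∑' m : ℕ,
            (Real.exp (-2 * (m + 1 : ℝ) * a * T) * f (t + 2 * (m + 1 : ℝ) * T)
              + Real.exp (-2 * a * ((m + 1 : ℝ) * T - t)) * f (2 * (m + 1 : ℝ) * T - t)))
      ∧ Summable (fun m : ℕ =>
          Real.exp (-2 * (m + 1 : ℝ) * a * T) * f (t + 2 * (m + 1 : ℝ) * T)
            + Real.exp (-2 * a * ((m + 1 : ℝ) * T - t)) * f (2 * (m + 1 : ℝ) * T - t)) := by
  intro t ht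
  have hsum_int := hasSum_dampedEvenExtension_translates hcont hr hdecay hT
    (R := fun ω => (F (a + ω * Complex.I)).re) (fun ω => by rw [hF]) hsum.of_abs t
  have hsum_nat := (hasSum_natCast_add_one_add_neg hsum_int).mul_left (Real.exp (a * t))
  have hzeroth : Real.exp (a * t) * dampedEvenExtension a f t = f t := by
    rw [dampedEvenExtension_of_nonneg ht.1, ← mul_assoc, ← Real.exp_add, neg_mul, add_neg_cancel,
      Real.exp_zero, one_mul]
  rw [mul_sub, Int.cast_zero, zero_mul, add_zero, hzeroth] at hsum_nat
  simp only [Int.cast_neg, Int.cast_add, Int.cast_natCast, Int.cast_one,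
    exp_mul_dampedEvenExtension_translates ht, Complex.ofReal_zero, zero_mul, add_zero] at hsum_nat
  refine ⟨?_, hsum_nat.summable⟩
  rw [hsum_nat.tsum_eq]
  ring

/-- **Exact aliasing formula for the Fourier-cosine Laplace inversion series**:
for `t ∈ (0, 2T)`,
`(2 e^{at}/T) [ Re F(a)/2 + Σ_{k≥1} Re F(a + ikπ/T) cos(kπt/T) ]
  = f(t) + Σ_{n≥1} [ e^{−2naT} f(t + 2nT) + e^{−2a(nT − t)} f(2nT − t) ]`,
and the aliasing series on the right converges. -/
theorem laplace_inversion_aliasing (a T : ℝ) (hT : 0 < T) (f : ℝ → ℝ)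
    (hcont : ContinuousOn f (Set.Ici 0))
    (hzero : ∀ t < (0 : ℝ), f t = 0)
    (M b : ℝ) (hM : 0 ≤ M) (hb : b < a)
    (hgrowth : ∀ t : ℝ, 0 ≤ t → |f t| ≤ M * Real.exp (b * t))
    (F : ℂ → ℂ)
    (hF : ∀ s : ℂ, F s = ∫ t in Set.Ioi (0 : ℝ), (f t : ℂ) * Complex.exp (-s * (t : ℂ)))
    (hsum : Summable fun k : ℕ =>
      |(F ((a : ℂ) + (((k + 1 : ℝ) * Real.pi / T : ℝ) : ℂ) * Complex.I)).re|) :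
    ∀ t ∈ Set.Ioo (0 : ℝ) (2 * T),
      ((2 * Real.exp (a * t) / T) *
        ((F (a : ℂ)).re / 2
          + ∑' k : ℕ, (F ((a : ℂ) + (((k + 1 : ℝ) * Real.pi / T : ℝ) : ℂ) * Complex.I)).re
              * Real.cos ((k + 1 : ℝ) * Real.pi * t / T))
        = f t + ∑' m : ℕ,
            (Real.exp (-2 * (m + 1 : ℝ) * a * T) * f (t + 2 * (m + 1 : ℝ) * T)
              + Real.exp (-2 * a * ((m + 1 : ℝ) * T - t)) * f (2 * (m + 1 : ℝ) * T - t)))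
      ∧ Summable (fun m : ℕ =>
          Real.exp (-2 * (m + 1 : ℝ) * a * T) * f (t + 2 * (m + 1 : ℝ) * T)
            + Real.exp (-2 * a * ((m + 1 : ℝ) * T - t)) * f (2 * (m + 1 : ℝ) * T - t)) := by
  have hO : f =O[atTop] fun t => Real.exp (b * t) :=
    .of_bound M ((eventually_ge_atTop 0).mono fun t ht => by simpa using hgrowth t ht)
  exact fun t ht => laplace_inversion_aliasing_general a T hT f hcont 2 one_lt_two
    (isBigO_rpow_exp_neg_mul_mul hb hO (-2)) F hF hsum t (Ioo_subset_Icc_self ht)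
end
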